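/- arXiv:math/0407032 — 2 statements merged into one kernel-verified Lean document; each statement's English description precedes it below -/
import Mathlib

section
/- Let f : ℝ → ℝ be continuous and 1-periodic (f (x + 1) = f x for all x). Then the following are equivalent: (i) for every c ∈ ℝ, the set {x ∈ Set.Ico (0:ℝ) 1 | f x = c} has at most two elements; (ii) there is exactly one point in Set.Ico (0:ℝ) 1 that is a local minimum point of f and exactly one point in Set.Ico (0:ℝ) 1 that is a local maximum point of f. -/
/-!
(i) ⇒ (ii): let `q` be a local minimum point in `(a, b)` with `f a ≤ f q`. If `f` takes every
value only finitely often on `(a, b)`, then `f q < f x` for all `x ≠ q` near `q`. Hence a level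
slightly above `f q` is taken at least three times: just to the left of `q`, between that point and
`a` (where `f` returns to `f a ≤ f q`), and to the right of `q`. Applied with `a` a global minimum
point and `b = a + p`, this leaves `a` as the only local minimum point per period `p`. Maxima are
minima for the dual order.

(ii) ⇒ (i): if `x < y < z < x + p` lie on one level then, by Rolle, `f` has a local extremum in each
of `(x, y)`, `(y, z)` and `(z, x + p)`, hence at least three per period.
-/

open Filter Function Set Topology

section Counting

variable {X : Type*}

lemma existsUnique_mem_and_iff_encard_eq_one {s : Set X} {P : X → Prop} :
    (∃! x, x ∈ s ∧ P x) ↔ {x ∈ s | P x}.encard = 1 := by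
  simp only [encard_eq_one, ExistsUnique, Set.ext_iff, mem_singleton_iff, mem_ofPred_eq]
  exact exists_congr fun x => ⟨fun ⟨hx, huniq⟩ y => ⟨huniq y, fun hy => hy ▸ hx⟩,
    fun h => ⟨(h x).2 rfl, fun y => (h y).1⟩⟩

lemma two_lt_encard_iff_exists_lt_lt [LinearOrder X] {s : Set X} :
    2 < s.encard ↔ ∃ x ∈ s, ∃ y ∈ s, ∃ z ∈ s, x < y ∧ y < z := by
  constructor
  · intro hs
    obtain ⟨t, hts, ht⟩ := exists_subset_encard_eq (k := 3) (Order.add_one_le_of_lt hs)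
    lift t to Finset X using finite_of_encard_eq_coe ht
    have hcard : t.card = 3 := by exact_mod_cast ht
    let e := t.orderEmbOfFin hcard
    have he (i : Fin 3) : e i ∈ s := hts (t.orderEmbOfFin_mem hcard i)
    exact ⟨e 0, he 0, e 1, he 1, e 2, he 2, e.strictMono (by decide), e.strictMono (by decide)⟩
  · rintro ⟨x, hx, y, hy, z, hz, hxy, hyz⟩
    have hthree : ({x, y, z} : Set X).encard = 3 :=
      encard_eq_three.2 ⟨x, y, z, hxy.ne, (hxy.trans hyz).ne, hyz.ne, rfl⟩
    calc (2 : ℕ∞) < 3 := by decide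
      _ = ({x, y, z} : Set X).encard := hthree.symm
      _ ≤ s.encard := encard_le_encard (by grind)

end Counting

section Periodic

lemma encard_sep_Ico_eq_of_periodic {G : Type*} [AddCommGroup G] [LinearOrder G]
    [IsOrderedAddMonoid G] [Archimedean G] {p : G} (hp : 0 < p) {P : G → Prop}
    (hP : Periodic P p) (a b : G) :
    {x ∈ Ico a (a + p) | P x}.encard = {x ∈ Ico b (b + p) | P x}.encard := by
  suffices hle : ∀ a b, {x ∈ Ico a (a + p) | P x}.encard ≤ {x ∈ Ico b (b + p) | P x}.encard from
    (hle a b).antisymm (hle b a)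
  intro a b
  refine encard_le_encard_of_injOn (f := toIcoMod hp b)
    (fun x hx => ⟨toIcoMod_mem_Ico hp b x, ?_⟩)
    (LeftInvOn.injOn (f₁' := toIcoMod hp a) fun x hx => ?_)
  · exact (hP.sub_zsmul_eq (toIcoDiv hp b x)).symm ▸ hx.2
  · rw [toIcoMod_toIcoMod, (toIcoMod_eq_self hp).2 hx.1]

variable {G α : Type*} [AddGroup G] [TopologicalSpace G] [IsTopologicalAddGroup G] [Preorder α]
  {f : G → α} {p : G}

lemma periodic_isLocalMin (hf : Periodic f p) : Periodic (IsLocalMin f) p := fun x => by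
  simp only [IsLocalMin, IsMinFilter, ← map_add_right_nhds p x, eventually_map, hf _]

lemma periodic_isLocalMax (hf : Periodic f p) : Periodic (IsLocalMax f) p :=
  periodic_isLocalMin (α := αᵒᵈ) hf

lemma periodic_isLocalExtr (hf : Periodic f p) : Periodic (IsLocalExtr f) p := fun x =>
  congrArg₂ Or (periodic_isLocalMin hf x) (periodic_isLocalMax hf x)

end Periodic

section LocalMin

lemma eventually_nhdsNE_lt_of_isLocalMin {X α : Type*} [TopologicalSpace X] [T1Space X]
    [PartialOrder α] {f : X → α} {s : Set X} {q : X} (hs : s ∈ 𝓝 q)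
    (hfin : {x ∈ s | f x = f q}.Finite) (hq : IsLocalMin f q) :
    ∀ᶠ x in 𝓝[≠] q, f q < f x := by
  have hne : ∀ᶠ x in 𝓝[≠] q, x ∉ {x ∈ s | f x = f q} :=
    nhdsNE_le_cofinite q hfin.eventually_cofinite_notMem
  filter_upwards [hne, nhdsWithin_le_nhds hs, nhdsWithin_le_nhds hq] with x hx hxs hle
  exact hle.lt_of_ne fun heq => hx ⟨hxs, heq.symm⟩

lemma lt_left_of_isLocalMin_of_encard_le_two {X α : Type*} [ConditionallyCompleteLinearOrder X]
    [DenselyOrdered X] [TopologicalSpace X] [OrderTopology X] [LinearOrder α]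
    [TopologicalSpace α] [OrderClosedTopology α] {f : X → α} {a b q : X}
    (hf : ContinuousOn f (Ico a b)) (hlevel : ∀ c, {x ∈ Ioo a b | f x = c}.encard ≤ 2)
    (hqab : q ∈ Ioo a b) (hq : IsLocalMin f q) : f q < f a := by
  by_contra! haq
  have hmem : Ioo a b ∈ 𝓝 q := Ioo_mem_nhds hqab.1 hqab.2
  have hstrict : ∀ᶠ x in 𝓝[≠] q, f q < f x :=
    eventually_nhdsNE_lt_of_isLocalMin hmem (finite_of_encard_le_coe (hlevel (f q))) hq
  have hleft : ∀ᶠ x in 𝓝[<] q, f q < f x := nhdsLT_le_nhdsNE q hstrict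
  have hright : ∀ᶠ x in 𝓝[>] q, f q < f x := nhdsGT_le_nhdsNE q hstrict
  have : (𝓝[<] q).NeBot := nhdsLT_neBot_of_exists_lt ⟨a, hqab.1⟩
  have : (𝓝[>] q).NeBot := nhdsGT_neBot_of_exists_gt ⟨b, hqab.2⟩
  obtain ⟨l, hl, hal, hlq⟩ := (hleft.and (Ioo_mem_nhdsLT hqab.1)).exists
  obtain ⟨r, hr, hqr, hrb⟩ := (hright.and (Ioo_mem_nhdsGT hqab.2)).exists
  have hcont : ContinuousAt f q := (hf.mono Ioo_subset_Ico_self).continuousAt hmem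
  have hbelow : ∀ᶠ x in 𝓝[<] q, f x < f l ∧ f x < f r :=
    nhdsWithin_le_nhds ((hcont.eventually_lt_const hl).and (hcont.eventually_lt_const hr))
  obtain ⟨w, ⟨hqw, hwl, hwr⟩, hlw, hwq⟩ :=
    ((hleft.and hbelow).and (Ioo_mem_nhdsLT hlq)).exists
  obtain ⟨y, ⟨hay, hyl⟩, hyw⟩ : f w ∈ f '' Ioo a l :=
    intermediate_value_Ioo hal.le (hf.mono (by grind)) ⟨haq.trans_lt hqw, hwl⟩
  obtain ⟨z, ⟨hqz, hzr⟩, hzw⟩ : f w ∈ f '' Ioo q r :=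
    intermediate_value_Ioo hqr.le (hf.mono (by grind)) ⟨hqw, hwr⟩
  refine (hlevel (f w)).not_gt (two_lt_encard_iff_exists_lt_lt.2
    ⟨y, ⟨⟨hay, ?_⟩, hyw⟩, w, ⟨⟨?_, ?_⟩, rfl⟩, z, ⟨⟨?_, ?_⟩, hzw⟩, ?_, ?_⟩) <;> order

end LocalMin

section LevelSets

variable {α : Type*} [LinearOrder α] [TopologicalSpace α] {f : ℝ → α} {p : ℝ}

lemma encard_isLocalMin_eq_one_of_encard_level_le_two [OrderClosedTopology α] (hp : 0 < p)
    (hf : Continuous f) (hper : Periodic f p) (a : ℝ)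
    (hlevel : ∀ c, {x ∈ Ico a (a + p) | f x = c}.encard ≤ 2) :
    {x ∈ Ico a (a + p) | IsLocalMin f x}.encard = 1 := by
  obtain ⟨-, ⟨m, rfl⟩, hm⟩ :=
    (hper.compact_of_continuous hp.ne' hf).exists_isLeast (range_nonempty f)
  have hm_le (x : ℝ) : f m ≤ f x := hm (mem_range_self x)
  rw [encard_sep_Ico_eq_of_periodic hp (periodic_isLocalMin hper) a m,
    ← existsUnique_mem_and_iff_encard_eq_one]
  refine ⟨m, ⟨left_mem_Ico.2 (lt_add_of_pos_right m hp), Eventually.of_forall hm_le⟩, ?_⟩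
  rintro q ⟨hq_mem, hq⟩
  by_contra hqm
  refine (hm_le q).not_gt (lt_left_of_isLocalMin_of_encard_le_two hf.continuousOn (fun c => ?_)
    ⟨hq_mem.1.lt_of_ne' hqm, hq_mem.2⟩ hq)
  calc {x ∈ Ioo m (m + p) | f x = c}.encard
      ≤ {x ∈ Ico m (m + p) | f x = c}.encard :=
        encard_le_encard fun x hx => ⟨Ioo_subset_Ico_self hx.1, hx.2⟩
    _ = {x ∈ Ico a (a + p) | f x = c}.encard :=
        encard_sep_Ico_eq_of_periodic hp (hper.comp (· = c)) m a
    _ ≤ 2 := hlevel c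

lemma encard_isLocalMax_eq_one_of_encard_level_le_two [OrderClosedTopology α] (hp : 0 < p)
    (hf : Continuous f) (hper : Periodic f p) (a : ℝ)
    (hlevel : ∀ c, {x ∈ Ico a (a + p) | f x = c}.encard ≤ 2) :
    {x ∈ Ico a (a + p) | IsLocalMax f x}.encard = 1 :=
  encard_isLocalMin_eq_one_of_encard_level_le_two (α := αᵒᵈ) hp hf hper a hlevel

lemma encard_level_le_two_of_encard_isLocalExtr_le_two [OrderTopology α] (hp : 0 < p)
    (hf : Continuous f) (hper : Periodic f p) (a : ℝ)
    (hextr : {x ∈ Ico a (a + p) | IsLocalExtr f x}.encard ≤ 2) (c : α) :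
    {x ∈ Ico a (a + p) | f x = c}.encard ≤ 2 := by
  contrapose! hextr
  obtain ⟨x, ⟨hx, hxc⟩, y, ⟨-, hyc⟩, z, ⟨hz, hzc⟩, hxy, hyz⟩ :=
    two_lt_encard_iff_exists_lt_lt.1 hextr
  have hzx : z < x + p := hz.2.trans_le (add_le_add_left hx.1 p)
  obtain ⟨u, ⟨hxu, huy⟩, hu⟩ :=
    exists_isLocalExtr_Ioo hxy hf.continuousOn (hxc.trans hyc.symm)
  obtain ⟨v, ⟨hyv, hvz⟩, hv⟩ :=
    exists_isLocalExtr_Ioo hyz hf.continuousOn (hyc.trans hzc.symm)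
  obtain ⟨w, ⟨hzw, hwx⟩, hw⟩ :=
    exists_isLocalExtr_Ioo hzx hf.continuousOn (hzc.trans ((hper x).trans hxc).symm)
  rw [encard_sep_Ico_eq_of_periodic hp (periodic_isLocalExtr hper) a x]
  refine two_lt_encard_iff_exists_lt_lt.2
    ⟨u, ⟨⟨?_, ?_⟩, hu⟩, v, ⟨⟨?_, ?_⟩, hv⟩, w, ⟨⟨?_, ?_⟩, hw⟩, ?_, ?_⟩ <;> order

theorem level_sets_atMostTwo_iff_unique_extrema_general [OrderTopology α] (hp : 0 < p)
    (hf : Continuous f) (hper : Periodic f p) (a : ℝ) :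
    (∀ c, {x ∈ Ico a (a + p) | f x = c}.encard ≤ 2) ↔
      (∃! x, x ∈ Ico a (a + p) ∧ IsLocalMin f x) ∧
      (∃! x, x ∈ Ico a (a + p) ∧ IsLocalMax f x) := by
  simp only [existsUnique_mem_and_iff_encard_eq_one]
  refine ⟨fun hlevel => ⟨encard_isLocalMin_eq_one_of_encard_level_le_two hp hf hper a hlevel,
    encard_isLocalMax_eq_one_of_encard_level_le_two hp hf hper a hlevel⟩, ?_⟩
  rintro ⟨hmin, hmax⟩
  refine encard_level_le_two_of_encard_isLocalExtr_le_two hp hf hper a ?_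
  calc {x ∈ Ico a (a + p) | IsLocalExtr f x}.encard
      = ({x ∈ Ico a (a + p) | IsLocalMin f x} ∪ {x ∈ Ico a (a + p) | IsLocalMax f x}).encard :=
        congrArg encard sep_or
    _ ≤ _ := encard_union_le _ _
    _ = 2 := by rw [hmin, hmax, one_add_one_eq_two]

end LevelSets

theorem level_sets_atMostTwo_iff_unique_extrema
    (f : ℝ → ℝ) (hf : Continuous f) (hper : ∀ x, f (x + 1) = f x) :
    (∀ c : ℝ, ({x ∈ Set.Ico (0:ℝ) 1 | f x = c}).encard ≤ 2) ↔
      ((∃! x, x ∈ Set.Ico (0:ℝ) 1 ∧ IsLocalMin f x) ∧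
       (∃! x, x ∈ Set.Ico (0:ℝ) 1 ∧ IsLocalMax f x)) := by
  simpa only [zero_add] using
    level_sets_atMostTwo_iff_unique_extrema_general one_pos hf hper 0
end

section
/- Let S denote the set of functions f : ℝ → ℝ that are smooth (ContDiff ℝ ⊤ f), 1-periodic (f (x + 1) = f x for all x), and have exactly one point in Set.Ico (0:ℝ) 1 that is a local minimum point of f and exactly one point in Set.Ico (0:ℝ) 1 that is a local maximum point of f. Then S is path-connected in the following sense: for any f, g ∈ S there exists a jointly continuous map H : ℝ × Set.Icc (0:ℝ) 1 → ℝ such that H (·, 0) = f, H (·, 1) = g, and for every t ∈ Set.Icc (0:ℝ) 1 the function H (·, t) belongs to S. -/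
/-!
A continuous periodic function has exactly one local minimum and one local maximum per period if and
only if, on some period interval `[a, a + p]`, it strictly increases up to a point `b` and strictly
decreases afterwards: by Rolle, it is injective between consecutive extrema. For fixed `a` and `b`
this monotonicity condition is convex, so functions with the same extremal points are joined by a
segment.

The extremal points can be moved to `±1/4` by precomposing with an increasing lift `φ` of a circle
diffeomorphism, coming from a Möbius transformation of the unit disc. Such lifts also form a convex
set containing the identity, so `f` is joined to `f ∘ φ`, and altogether `f` to `g` through
`f ∼ f ∘ φ ∼ g ∘ ψ ∼ g`. The paths live in `C(ℝ, ℝ)` with the compact-open topology, where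
continuity of a path is joint continuity of the homotopy.
-/

/-- The set of smooth 1-periodic functions `ℝ → ℝ` having exactly one local minimum
point and exactly one local maximum point in the period window `[0,1)`. -/
def SmoothOneMinOneMax : Set (ℝ → ℝ) :=
  {f | ContDiff ℝ (⊤ : ℕ∞) f ∧ (∀ x, f (x + 1) = f x) ∧
    (∃! x, x ∈ Set.Ico (0:ℝ) 1 ∧ IsLocalMin f x) ∧
    (∃! x, x ∈ Set.Ico (0:ℝ) 1 ∧ IsLocalMax f x)}

open Set Filter Function Topology

section Periodic

theorem existsUnique_mem_Ico_of_periodic {α : Type*} [AddCommGroup α] [LinearOrder α]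
    [IsOrderedAddMonoid α] [Archimedean α] {P : α → Prop} {p : α} (hP : Periodic P p) (hp : 0 < p)
    {a : α} (b : α) (h : ∃! x, x ∈ Ico a (a + p) ∧ P x) : ∃! x, x ∈ Ico b (b + p) ∧ P x := by
  have hmod (c x : α) : P (toIcoMod hp c x) ↔ P x := (hP.sub_zsmul_eq (toIcoDiv hp c x)).to_iff
  obtain ⟨x, ⟨-, hx⟩, hunique⟩ := h
  refine ⟨toIcoMod hp b x, ⟨toIcoMod_mem_Ico hp b x, (hmod b x).2 hx⟩, fun y ⟨hy, hPy⟩ ↦ ?_⟩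
  rw [← hunique (toIcoMod hp a y) ⟨toIcoMod_mem_Ico hp a y, (hmod a y).2 hPy⟩,
    toIcoMod_toIcoMod, (toIcoMod_eq_self hp).2 hy]

theorem periodic_isLocalMin_s3 {α β : Type*} [TopologicalSpace α] [AddGroup α]
    [SeparatelyContinuousAdd α] [Preorder β] {f : α → β} {p : α} (hf : Periodic f p) :
    Periodic (IsLocalMin f) p := fun x ↦ by
  have hnhds : map (· + p) (𝓝 x) = 𝓝 (x + p) := (Homeomorph.addRight p).map_nhds_eq x
  simp only [IsLocalMin, IsMinFilter, ← hnhds, eventually_map, hf _]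

theorem periodic_isLocalMax_s3 {α β : Type*} [TopologicalSpace α] [AddGroup α]
    [SeparatelyContinuousAdd α] [Preorder β] {f : α → β} {p : α} (hf : Periodic f p) :
    Periodic (IsLocalMax f) p :=
  periodic_isLocalMin_s3 (β := βᵒᵈ) hf

variable {β : Type*} [LinearOrder β] [TopologicalSpace β] {f : ℝ → β} {p : ℝ}

theorem exists_mem_Ico_forall_le_of_periodic [ClosedIicTopology β] (hf : Periodic f p) (hp : 0 < p)
    (hc : Continuous f) (a : ℝ) : ∃ x ∈ Ico a (a + p), ∀ y, f x ≤ f y := by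
  obtain ⟨_, ⟨x, rfl⟩, hx⟩ :=
    (hf.compact_of_continuous hp.ne' hc).exists_isLeast (range_nonempty f)
  obtain ⟨y, hy, hxy⟩ := hf.exists_mem_Ico hp x a
  exact ⟨y, hy, fun z ↦ hxy ▸ hx (mem_range_self z)⟩

theorem exists_mem_Ico_forall_ge_of_periodic [ClosedIciTopology β] (hf : Periodic f p) (hp : 0 < p)
    (hc : Continuous f) (a : ℝ) : ∃ x ∈ Ico a (a + p), ∀ y, f y ≤ f x :=
  exists_mem_Ico_forall_le_of_periodic (β := βᵒᵈ) hf hp hc a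

end Periodic

section LocalExtr

variable {α β : Type*} [TopologicalSpace α]

section Preorder

variable [Preorder α] [Preorder β] {f : α → β} {s : Set α} {x : α}

theorem not_isLocalMin_of_strictMonoOn [(𝓝[<] x).NeBot] (h : StrictMonoOn f s)
    (hs : s ∈ 𝓝[≤] x) : ¬ IsLocalMin f x := fun hmin ↦ by
  have hlt : ∀ᶠ z in 𝓝[<] x, f z < f x := by
    filter_upwards [nhdsWithin_mono x Iio_subset_Iic_self hs, self_mem_nhdsWithin] with z hz hzx
    exact h hz (mem_of_mem_nhdsWithin self_mem_Iic hs) hzx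
  obtain ⟨z, hzx, hxz⟩ := (hlt.and (hmin.filter_mono nhdsWithin_le_nhds)).exists
  exact hzx.not_ge hxz

theorem not_isLocalMin_of_strictAntiOn [(𝓝[>] x).NeBot] (h : StrictAntiOn f s)
    (hs : s ∈ 𝓝[≥] x) : ¬ IsLocalMin f x :=
  have : (𝓝[<] OrderDual.toDual x).NeBot := ‹(𝓝[>] x).NeBot›
  not_isLocalMin_of_strictMonoOn (x := OrderDual.toDual x) (fun _ hy _ hz hyz ↦ h hz hy hyz) hs

theorem not_isLocalMax_of_strictMonoOn [(𝓝[>] x).NeBot] (h : StrictMonoOn f s)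
    (hs : s ∈ 𝓝[≥] x) : ¬ IsLocalMax f x :=
  not_isLocalMin_of_strictAntiOn (β := βᵒᵈ) h.dual_right hs

theorem not_isLocalMax_of_strictAntiOn [(𝓝[<] x).NeBot] (h : StrictAntiOn f s)
    (hs : s ∈ 𝓝[≤] x) : ¬ IsLocalMax f x :=
  not_isLocalMin_of_strictMonoOn (β := βᵒᵈ) h.dual_right hs

end Preorder

theorem injOn_Icc_of_forall_not_isLocalExtr [ConditionallyCompleteLinearOrder α] [DenselyOrdered α]
    [OrderTopology α] [LinearOrder β] [TopologicalSpace β] [OrderTopology β] {f : α → β} {a b : α}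
    (hc : ContinuousOn f (Icc a b)) (h : ∀ y ∈ Ioo a b, ¬ IsLocalExtr f y) : InjOn f (Icc a b) := by
  intro x hx y hy he
  by_contra hne
  wlog hxy : x < y generalizing x y
  · exact this hy hx he.symm (Ne.symm hne) ((lt_or_gt_of_ne hne).resolve_left hxy)
  obtain ⟨z, hz, hext⟩ := exists_isLocalExtr_Ioo hxy (hc.mono <| Icc_subset_Icc hx.1 hy.2) he
  exact h z (Ioo_subset_Ioo hx.1 hy.2 hz) hext

end LocalExtr

/-- `f` strictly increases on `[a, b]` and strictly decreases on `[b, c]`, where `a < b < c`. For a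
periodic `f` this is used with `[a, c]` a period interval, whose end points are then the minimum
points of `f` and whose interior point `b` is the maximum point. -/
structure StrictUnimodalOn {α β : Type*} [Preorder α] [Preorder β] (f : α → β) (a b c : α) :
    Prop where
  left_lt : a < b
  lt_right : b < c
  strictMonoOn : StrictMonoOn f (Icc a b)
  strictAntiOn : StrictAntiOn f (Icc b c)

namespace StrictUnimodalOn

theorem le_peak {α β : Type*} [LinearOrder α] [Preorder β] {f : α → β} {a b c x : α}
    (h : StrictUnimodalOn f a b c) (hx : x ∈ Icc a c) : f x ≤ f b := by
  rcases le_total x b with hxb | hbx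
  · exact h.strictMonoOn.monotoneOn ⟨hx.1, hxb⟩ (right_mem_Icc.2 h.left_lt.le) hxb
  · exact h.strictAntiOn.antitoneOn (left_mem_Icc.2 h.lt_right.le) ⟨hbx, hx.2⟩ hbx

theorem min_endpoints_le {α β : Type*} [LinearOrder α] [LinearOrder β] {f : α → β} {a b c x : α}
    (h : StrictUnimodalOn f a b c) (hx : x ∈ Icc a c) : min (f a) (f c) ≤ f x := by
  rcases le_total x b with hxb | hbx
  · exact min_le_of_left_le <|
      h.strictMonoOn.monotoneOn (left_mem_Icc.2 h.left_lt.le) ⟨hx.1, hxb⟩ hx.1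
  · exact min_le_of_right_le <|
      h.strictAntiOn.antitoneOn ⟨hbx, hx.2⟩ (right_mem_Icc.2 h.lt_right.le) hx.2

theorem comp_strictMono {α β γ : Type*} [LinearOrder α] [Preorder β] [Preorder γ] {f : β → γ}
    {φ : α → β} {a b c : α} (h : StrictUnimodalOn f (φ a) (φ b) (φ c)) (hφ : StrictMono φ) :
    StrictUnimodalOn (f ∘ φ) a b c where
  left_lt := hφ.lt_iff_lt.1 h.left_lt
  lt_right := hφ.lt_iff_lt.1 h.lt_right
  strictMonoOn := h.strictMonoOn.comp (hφ.strictMonoOn _) hφ.monotone.mapsTo_Icc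
  strictAntiOn := h.strictAntiOn.comp_strictMonoOn (hφ.strictMonoOn _) hφ.monotone.mapsTo_Icc

variable {α β : Type*} [AddCommGroup α] [LinearOrder α] [IsOrderedAddMonoid α] [Archimedean α]
  [DenselyOrdered α] [TopologicalSpace α] [OrderTopology α] {f : α → β} {a b p : α}

theorem existsUnique_isLocalMin [LinearOrder β] (h : StrictUnimodalOn f a b (a + p))
    (hf : Periodic f p) : ∃! x, x ∈ Ico 0 p ∧ IsLocalMin f x := by
  have : Nontrivial α := ⟨a, b, h.left_lt.ne⟩
  have hp : 0 < p := (lt_add_iff_pos_right a).1 (h.left_lt.trans h.lt_right)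
  have ha : IsLocalMin f a := .of_forall fun x ↦ by
    obtain ⟨y, hy, hxy⟩ := hf.exists_mem_Ico hp x a
    simpa [hxy, hf a] using h.min_endpoints_le (Ico_subset_Icc_self hy)
  rw [← zero_add p]
  refine existsUnique_mem_Ico_of_periodic (periodic_isLocalMin_s3 hf) hp (a := a) 0
    ⟨a, ⟨left_mem_Ico.2 (lt_add_of_pos_right a hp), ha⟩, fun x ⟨hx, hmin⟩ ↦ ?_⟩
  by_contra hxa
  have hax : a < x := hx.1.lt_of_ne' hxa
  rcases le_or_gt x b with hxb | hbx
  · exact not_isLocalMin_of_strictMonoOn h.strictMonoOn (Icc_mem_nhdsLE_of_mem ⟨hax, hxb⟩) hmin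
  · exact not_isLocalMin_of_strictAntiOn h.strictAntiOn (Icc_mem_nhdsGE_of_mem ⟨hbx.le, hx.2⟩) hmin

theorem existsUnique_isLocalMax [Preorder β] (h : StrictUnimodalOn f a b (a + p))
    (hf : Periodic f p) : ∃! x, x ∈ Ico 0 p ∧ IsLocalMax f x := by
  have : Nontrivial α := ⟨a, b, h.left_lt.ne⟩
  have hp : 0 < p := (lt_add_iff_pos_right a).1 (h.left_lt.trans h.lt_right)
  have hb : IsLocalMax f b := .of_forall fun x ↦ by
    obtain ⟨y, hy, hxy⟩ := hf.exists_mem_Ico hp x a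
    exact hxy ▸ h.le_peak (Ico_subset_Icc_self hy)
  rw [← zero_add p]
  refine existsUnique_mem_Ico_of_periodic (periodic_isLocalMax_s3 hf) hp (a := a) 0
    ⟨b, ⟨⟨h.left_lt.le, h.lt_right⟩, hb⟩, fun x ⟨hx, hmax⟩ ↦ ?_⟩
  rcases lt_trichotomy x b with hxb | rfl | hbx
  · exact absurd hmax <|
      not_isLocalMax_of_strictMonoOn h.strictMonoOn (Icc_mem_nhdsGE_of_mem ⟨hx.1, hxb⟩)
  · rfl
  · exact absurd hmax <|
      not_isLocalMax_of_strictAntiOn h.strictAntiOn (Icc_mem_nhdsLE_of_mem ⟨hbx, hx.2.le⟩)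

end StrictUnimodalOn

theorem exists_strictUnimodalOn_of_existsUnique {β : Type*} [LinearOrder β] [TopologicalSpace β]
    [OrderTopology β] {f : ℝ → β} {p : ℝ} (hf : Periodic f p) (hp : 0 < p) (hc : Continuous f)
    (hmin : ∃! x, x ∈ Ico 0 p ∧ IsLocalMin f x) (hmax : ∃! x, x ∈ Ico 0 p ∧ IsLocalMax f x) :
    ∃ a b, StrictUnimodalOn f a b (a + p) := by
  rw [← zero_add p] at hmin hmax
  obtain ⟨a, -, ha⟩ := exists_mem_Ico_forall_le_of_periodic hf hp hc 0
  obtain ⟨b, hb_mem, hb⟩ := exists_mem_Ico_forall_ge_of_periodic hf hp hc a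
  have eq_a {y : ℝ} (hy : y ∈ Ico a (a + p)) (h : IsLocalMin f y) : y = a :=
    (existsUnique_mem_Ico_of_periodic (periodic_isLocalMin_s3 hf) hp a hmin).unique ⟨hy, h⟩
      ⟨left_mem_Ico.2 (lt_add_of_pos_right a hp), .of_forall ha⟩
  have eq_b {y : ℝ} (hy : y ∈ Ico a (a + p)) (h : IsLocalMax f y) : y = b :=
    (existsUnique_mem_Ico_of_periodic (periodic_isLocalMax_s3 hf) hp a hmax).unique ⟨hy, h⟩
      ⟨hb_mem, .of_forall hb⟩
  have hne : b ≠ a := by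
    rintro rfl
    -- `f` is constant, so every point is a local minimum
    have hmid : IsLocalMin f (b + p / 2) := .of_forall fun x ↦ (hb _).trans (ha x)
    linarith [eq_a ⟨by linarith, by linarith⟩ hmid]
  have not_extr {y : ℝ} (hy : y ∈ Ioo a (a + p)) (hyb : y ≠ b) : ¬ IsLocalExtr f y := by
    rintro (h | h)
    · exact hy.1.ne' (eq_a (Ioo_subset_Ico_self hy) h)
    · exact hyb (eq_b (Ioo_subset_Ico_self hy) h)
  refine ⟨a, b, hb_mem.1.lt_of_ne' hne, hb_mem.2, ?_, ?_⟩
  · exact hc.continuousOn.strictMonoOn_of_injOn_Icc hb_mem.1 (ha b) <|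
      injOn_Icc_of_forall_not_isLocalExtr hc.continuousOn fun y hy ↦
        not_extr ⟨hy.1, hy.2.trans hb_mem.2⟩ hy.2.ne
  · exact hc.continuousOn.strictAntiOn_of_injOn_Icc hb_mem.2.le (hb _) <|
      injOn_Icc_of_forall_not_isLocalExtr hc.continuousOn fun y hy ↦
        not_extr ⟨hb_mem.1.trans_lt hy.1, hy.2⟩ hy.1.ne'

section Convex

variable {α 𝕜 E : Type*} [Preorder α] [Semiring 𝕜] [PartialOrder 𝕜] [AddCommMonoid E]
  [PartialOrder E] [IsOrderedCancelAddMonoid E] [Module 𝕜 E] [PosSMulStrictMono 𝕜 E]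

theorem convex_setOf_strictMonoOn (s : Set α) : Convex 𝕜 {f : α → E | StrictMonoOn f s} :=
  convex_iff_forall_pos.2 fun _ hf _ hg _ _ hu hv _ _ hx _ hy hxy ↦
    add_lt_add (smul_lt_smul_of_pos_left (hf hx hy hxy) hu)
      (smul_lt_smul_of_pos_left (hg hx hy hxy) hv)

theorem convex_setOf_strictAntiOn (s : Set α) : Convex 𝕜 {f : α → E | StrictAntiOn f s} :=
  convex_iff_forall_pos.2 fun _ hf _ hg _ _ hu hv _ _ hx _ hy hxy ↦
    add_lt_add (smul_lt_smul_of_pos_left (hf hx hy hxy) hu)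
      (smul_lt_smul_of_pos_left (hg hx hy hxy) hv)

theorem convex_setOf_strictUnimodalOn (a b c : α) :
    Convex 𝕜 {f : α → E | StrictUnimodalOn f a b c} :=
  fun _ hf _ hg _ _ hu hv huv ↦
    ⟨hf.left_lt, hf.lt_right,
      convex_setOf_strictMonoOn _ hf.strictMonoOn hg.strictMonoOn hu hv huv,
      convex_setOf_strictAntiOn _ hf.strictAntiOn hg.strictAntiOn hu hv huv⟩

end Convex

/-- The analogue of `SmoothOneMinOneMax` for functions of class `C^n`, its case
`n = ∞`. -/
def ContDiffOneMinOneMax (n : WithTop ℕ∞) : Set (ℝ → ℝ) :=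
  {f | ContDiff ℝ n f ∧ Periodic f 1 ∧
    (∃! x, x ∈ Ico (0 : ℝ) 1 ∧ IsLocalMin f x) ∧ (∃! x, x ∈ Ico (0 : ℝ) 1 ∧ IsLocalMax f x)}

/-- `φ` is a strictly increasing lift to `ℝ`, of class `C^n`, of a homeomorphism of the circle
`ℝ / ℤ`. The inverse homeomorphism is not required to be of class `C^n`. -/
structure IsCircleLift (n : WithTop ℕ∞) (φ : ℝ → ℝ) : Prop where
  contDiff : ContDiff ℝ n φ
  strictMono : StrictMono φ
  map_add_one : ∀ x, φ (x + 1) = φ x + 1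

variable {n : WithTop ℕ∞}

theorem mem_contDiffOneMinOneMax_iff {f : ℝ → ℝ} :
    f ∈ ContDiffOneMinOneMax n ↔
      ContDiff ℝ n f ∧ Periodic f 1 ∧ ∃ a b, StrictUnimodalOn f a b (a + 1) := by
  refine and_congr_right fun hs ↦ and_congr_right fun hf ↦ ⟨fun ⟨hmin, hmax⟩ ↦ ?_, ?_⟩
  · exact exists_strictUnimodalOn_of_existsUnique hf one_pos hs.continuous hmin hmax
  · rintro ⟨a, b, h⟩
    exact ⟨h.existsUnique_isLocalMin hf, h.existsUnique_isLocalMax hf⟩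

theorem convex_setOf_mem_contDiffOneMinOneMax_strictUnimodalOn (a b : ℝ) :
    Convex ℝ {f | f ∈ ContDiffOneMinOneMax n ∧ StrictUnimodalOn f a b (a + 1)} := by
  rintro f ⟨hf, hfu⟩ g ⟨hg, hgu⟩ u v hu hv huv
  have hunimodal := convex_setOf_strictUnimodalOn a b _ hfu hgu hu hv huv
  have hperiodic : Periodic (u • f + v • g) 1 := (hf.2.1.smul u).add (hg.2.1.smul v)
  have hcontDiff : ContDiff ℝ n (u • f + v • g) := (hf.1.const_smul u).add (hg.1.const_smul v)
  exact ⟨mem_contDiffOneMinOneMax_iff.2 ⟨hcontDiff, hperiodic, a, b, hunimodal⟩, hunimodal⟩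

namespace IsCircleLift

variable {φ : ℝ → ℝ}

theorem surjective (hφ : IsCircleLift n φ) : Surjective φ :=
  let ψ : CircleDeg1Lift := ⟨⟨φ, hφ.strictMono.monotone⟩, hφ.map_add_one⟩
  hφ.contDiff.continuous.surjective ψ.tendsto_atTop ψ.tendsto_atBot

protected theorem id : IsCircleLift n id where
  contDiff := contDiff_id
  strictMono := strictMono_id
  map_add_one _ := rfl

theorem const_add (hφ : IsCircleLift n φ) (c : ℝ) : IsCircleLift n fun x ↦ c + φ x where
  contDiff := contDiff_const.add hφ.contDiff
  strictMono := fun _ _ hxy ↦ add_lt_add_right (hφ.strictMono hxy) c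
  map_add_one x := by rw [hφ.map_add_one, add_assoc]

theorem strictUnimodalOn_comp {β : Type*} [Preorder β] {f : ℝ → β} {a b : ℝ}
    (hφ : IsCircleLift n φ) (hf : StrictUnimodalOn f (φ a) (φ b) (φ a + 1)) :
    StrictUnimodalOn (f ∘ φ) a b (a + 1) :=
  .comp_strictMono (hφ.map_add_one a ▸ hf) hφ.strictMono

theorem comp_mem_contDiffOneMinOneMax {f : ℝ → ℝ} (hφ : IsCircleLift n φ)
    (hf : f ∈ ContDiffOneMinOneMax n) : f ∘ φ ∈ ContDiffOneMinOneMax n := by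
  obtain ⟨hs, hper, a, b, h⟩ := mem_contDiffOneMinOneMax_iff.1 hf
  obtain ⟨a, rfl⟩ := hφ.surjective a
  obtain ⟨b, rfl⟩ := hφ.surjective b
  have hper_comp : Periodic (f ∘ φ) 1 := fun x ↦ by simp [hφ.map_add_one, hper _]
  exact mem_contDiffOneMinOneMax_iff.2
    ⟨hs.comp hφ.contDiff, hper_comp, a, b, hφ.strictUnimodalOn_comp h⟩

end IsCircleLift

theorem convex_setOf_isCircleLift : Convex ℝ {φ | IsCircleLift n φ} := fun φ hφ ψ hψ u v hu hv huv ↦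
  { contDiff := (hφ.contDiff.const_smul u).add (hψ.contDiff.const_smul v)
    strictMono := strictMonoOn_univ.1 <| convex_setOf_strictMonoOn univ
      (hφ.strictMono.strictMonoOn _) (hψ.strictMono.strictMonoOn _) hu hv huv
    map_add_one := fun x ↦ by
      simp only [Pi.add_apply, Pi.smul_apply, smul_eq_mul, hφ.map_add_one, hψ.map_add_one]
      linear_combination huv }

section MobiusLift

variable {r : ℝ}

/-- The displacement, as a function of the angle `θ`, of the boundary action of a Möbius
transformation of the unit disc; it equals `-arg (1 - r * exp (θ * I))` for `|r| < 1`. -/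
noncomputable def mobiusAngle (r θ : ℝ) : ℝ :=
  Real.arctan (r * Real.sin θ / (1 - r * Real.cos θ))

/-- The lift to `ℝ` of the boundary action of a Möbius transformation of the unit disc, the circle
being parametrized by `x ↦ exp (2 * π * x * I)`. -/
noncomputable def mobiusLift (r x : ℝ) : ℝ :=
  x + mobiusAngle r (2 * Real.pi * x) / Real.pi

theorem one_sub_mul_cos_pos (hr : |r| < 1) (θ : ℝ) : 0 < 1 - r * Real.cos θ := by
  have : |r * Real.cos θ| < 1 := by
    rw [abs_mul]
    exact mul_lt_one_of_nonneg_of_lt_one_left (abs_nonneg r) hr (Real.abs_cos_le_one θ)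
  linarith [lt_of_abs_lt this]

theorem hasDerivAt_mobiusAngle (hr : |r| < 1) (θ : ℝ) :
    HasDerivAt (mobiusAngle r)
      (r * (Real.cos θ - r) / ((1 - r * Real.cos θ) ^ 2 + (r * Real.sin θ) ^ 2)) θ := by
  have hden := one_sub_mul_cos_pos hr θ
  have hquot := ((Real.hasDerivAt_sin θ).const_mul r).div
    (((Real.hasDerivAt_cos θ).const_mul r).const_sub 1) hden.ne'
  refine hquot.arctan.congr_deriv ?_
  have hnorm : 0 < (1 - r * Real.cos θ) ^ 2 + (r * Real.sin θ) ^ 2 := by positivity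
  simp only [Pi.div_apply]
  field_simp [hnorm.ne']
  linear_combination (-r ^ 2) * Real.sin_sq_add_cos_sq θ

/-- The derivative is the Poisson kernel. -/
theorem hasDerivAt_mobiusLift (hr : |r| < 1) (x : ℝ) :
    HasDerivAt (mobiusLift r)
      ((1 - r ^ 2) / ((1 - r * Real.cos (2 * Real.pi * x)) ^ 2
        + (r * Real.sin (2 * Real.pi * x)) ^ 2)) x := by
  have hden := one_sub_mul_cos_pos hr (2 * Real.pi * x)
  have hlinear : HasDerivAt (fun x ↦ 2 * Real.pi * x) (2 * Real.pi) x := by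
    simpa using (hasDerivAt_id x).const_mul (2 * Real.pi)
  have hadd := (hasDerivAt_id x).add
    (((hasDerivAt_mobiusAngle hr (2 * Real.pi * x)).comp x hlinear).div_const Real.pi)
  refine hadd.congr_deriv ?_
  have hnorm : 0 < (1 - r * Real.cos (2 * Real.pi * x)) ^ 2
      + (r * Real.sin (2 * Real.pi * x)) ^ 2 := by positivity
  field_simp [hnorm.ne']
  linear_combination r ^ 2 * Real.sin_sq_add_cos_sq (2 * Real.pi * x)

theorem isCircleLift_mobiusLift (hr : |r| < 1) : IsCircleLift n (mobiusLift r) where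
  contDiff := by
    have hquot : ContDiff ℝ n fun x ↦ r * Real.sin (2 * Real.pi * x) /
        (1 - r * Real.cos (2 * Real.pi * x)) :=
      ContDiff.div (by fun_prop) (by fun_prop) fun x ↦ (one_sub_mul_cos_pos hr _).ne'
    exact contDiff_id.add ((Real.contDiff_arctan.comp hquot).div_const Real.pi)
  strictMono := strictMono_of_hasDerivAt_pos (hasDerivAt_mobiusLift hr) fun x ↦ by
    have hden := one_sub_mul_cos_pos hr (2 * Real.pi * x)
    have hnum : 0 < 1 - r ^ 2 := sub_pos.2 ((sq_lt_one_iff_abs_lt_one r).2 hr)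
    positivity
  map_add_one x := by
    have hangle : 2 * Real.pi * (x + 1) = 2 * Real.pi * x + 2 * Real.pi := by ring
    simp only [mobiusLift, mobiusAngle, hangle, Real.sin_add_two_pi, Real.cos_add_two_pi]
    ring

theorem mobiusLift_neg (r x : ℝ) : mobiusLift r (-x) = -mobiusLift r x := by
  simp only [mobiusLift, mobiusAngle, mul_neg, Real.sin_neg, Real.cos_neg, neg_div,
    Real.arctan_neg, neg_add]

theorem mobiusLift_one_div_four (r : ℝ) :
    mobiusLift r (1 / 4) = 1 / 4 + Real.arctan r / Real.pi := by
  have hangle : 2 * Real.pi * (1 / 4) = Real.pi / 2 := by ring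
  simp only [mobiusLift, mobiusAngle, hangle, Real.sin_pi_div_two, Real.cos_pi_div_two, mul_one,
    mul_zero, sub_zero, div_one]

theorem exists_mobiusLift_one_div_four_eq {d : ℝ} (hd : d ∈ Ioo (0 : ℝ) (1 / 2)) :
    ∃ r, |r| < 1 ∧ mobiusLift r (1 / 4) = d := by
  have hπ := Real.pi_pos
  set s := Real.pi * (d - 1 / 4) with hs
  have hs_lower : -(Real.pi / 4) < s := by rw [hs]; nlinarith [hd.1]
  have hs_upper : s < Real.pi / 4 := by rw [hs]; nlinarith [hd.2]
  have harctan : Real.arctan (Real.tan s) = s := Real.arctan_tan (by linarith) (by linarith)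
  refine ⟨Real.tan s, abs_lt.2 ⟨?_, ?_⟩, ?_⟩
  · rwa [← Real.arctan_lt_arctan_iff, harctan, Real.arctan_neg, Real.arctan_one]
  · rwa [← Real.arctan_lt_arctan_iff, harctan, Real.arctan_one]
  · rw [mobiusLift_one_div_four, harctan, hs]
    field_simp
    ring

theorem exists_isCircleLift_eq {a b : ℝ} (hab : a < b) (hba : b < a + 1) :
    ∃ φ, IsCircleLift n φ ∧ φ (-(1 / 4)) = a ∧ φ (1 / 4) = b := by
  obtain ⟨r, hr, hquarter⟩ :=
    exists_mobiusLift_one_div_four_eq (d := (b - a) / 2) ⟨by linarith, by linarith⟩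
  refine ⟨_, (isCircleLift_mobiusLift hr).const_add ((a + b) / 2), ?_, ?_⟩
  · rw [mobiusLift_neg, hquarter]
    ring
  · rw [hquarter]
    ring

end MobiusLift

section Joined

theorem joinedIn_coe_preimage_of_convex {X E : Type*} [TopologicalSpace X] [AddCommGroup E]
    [Module ℝ E] [TopologicalSpace E] [IsTopologicalAddGroup E] [ContinuousSMul ℝ E]
    {s : Set (X → E)} (hs : Convex ℝ s) {f g : C(X, E)} (hf : ⇑f ∈ s) (hg : ⇑g ∈ s) :
    JoinedIn {k : C(X, E) | ⇑k ∈ s} f g :=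
  .of_segment_subset <|
    (hs.linear_preimage (ContinuousMap.coeFnLinearMap ℝ)).segment_subset hf hg

theorem joinedIn_contDiffOneMinOneMax_of_strictUnimodalOn {f g : C(ℝ, ℝ)} {a b : ℝ}
    (hf : ⇑f ∈ ContDiffOneMinOneMax n) (hg : ⇑g ∈ ContDiffOneMinOneMax n)
    (hfu : StrictUnimodalOn f a b (a + 1)) (hgu : StrictUnimodalOn g a b (a + 1)) :
    JoinedIn {k : C(ℝ, ℝ) | ⇑k ∈ ContDiffOneMinOneMax n} f g :=
  (joinedIn_coe_preimage_of_convex (convex_setOf_mem_contDiffOneMinOneMax_strictUnimodalOn a b)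
    ⟨hf, hfu⟩ ⟨hg, hgu⟩).mono fun _ h ↦ h.1

theorem joinedIn_contDiffOneMinOneMax_comp {f φ : C(ℝ, ℝ)} (hf : ⇑f ∈ ContDiffOneMinOneMax n)
    (hφ : IsCircleLift n φ) :
    JoinedIn {k : C(ℝ, ℝ) | ⇑k ∈ ContDiffOneMinOneMax n} f (f.comp φ) := by
  have hlift : JoinedIn {ψ : C(ℝ, ℝ) | IsCircleLift n ψ} (.id ℝ) φ :=
    joinedIn_coe_preimage_of_convex convex_setOf_isCircleLift .id hφ
  refine (hlift.map (ContinuousMap.continuous_postcomp f)).mono ?_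
  rintro _ ⟨ψ, hψ, rfl⟩
  exact hψ.comp_mem_contDiffOneMinOneMax hf

theorem exists_joinedIn_strictUnimodalOn_one_div_four {f : C(ℝ, ℝ)}
    (hf : ⇑f ∈ ContDiffOneMinOneMax n) :
    ∃ k : C(ℝ, ℝ), JoinedIn {k : C(ℝ, ℝ) | ⇑k ∈ ContDiffOneMinOneMax n} f k ∧
      StrictUnimodalOn k (-(1 / 4)) (1 / 4) (-(1 / 4) + 1) := by
  obtain ⟨-, -, a, b, h⟩ := mem_contDiffOneMinOneMax_iff.1 hf
  obtain ⟨φ, hφ, rfl, rfl⟩ := exists_isCircleLift_eq (n := n) h.left_lt h.lt_right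
  exact ⟨f.comp ⟨φ, hφ.contDiff.continuous⟩, joinedIn_contDiffOneMinOneMax_comp hf hφ,
    hφ.strictUnimodalOn_comp h⟩

theorem joinedIn_contDiffOneMinOneMax {f g : C(ℝ, ℝ)} (hf : ⇑f ∈ ContDiffOneMinOneMax n)
    (hg : ⇑g ∈ ContDiffOneMinOneMax n) :
    JoinedIn {k : C(ℝ, ℝ) | ⇑k ∈ ContDiffOneMinOneMax n} f g := by
  obtain ⟨k, hfk, hk⟩ := exists_joinedIn_strictUnimodalOn_one_div_four hf
  obtain ⟨l, hgl, hl⟩ := exists_joinedIn_strictUnimodalOn_one_div_four hg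
  have hkl := joinedIn_contDiffOneMinOneMax_of_strictUnimodalOn hfk.target_mem hgl.target_mem hk hl
  exact (hfk.trans hkl).trans hgl.symm

theorem exists_homotopy_of_joinedIn {X Y : Type*} [TopologicalSpace X] [TopologicalSpace Y]
    [LocallyCompactPair X Y] {s : Set (X → Y)} {f g : C(X, Y)}
    (h : JoinedIn {k : C(X, Y) | ⇑k ∈ s} f g) :
    ∃ H : X × Icc (0 : ℝ) 1 → Y, Continuous H ∧ (∀ x, H (x, 0) = f x) ∧ (∀ x, H (x, 1) = g x) ∧
      ∀ t, (fun x ↦ H (x, t)) ∈ s := by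
  obtain ⟨γ, hγ⟩ := h
  refine ⟨fun p ↦ γ p.2 p.1, by fun_prop, fun x ↦ ?_, fun x ↦ ?_, hγ⟩
  · exact DFunLike.congr_fun γ.source x
  · exact DFunLike.congr_fun γ.target x

end Joined

theorem smoothOneMinOneMax_pathConnected_general
    (f g : ℝ → ℝ) (hf : f ∈ ContDiffOneMinOneMax n) (hg : g ∈ ContDiffOneMinOneMax n) :
    ∃ H : ℝ × Set.Icc (0:ℝ) 1 → ℝ, Continuous H ∧
      (∀ x : ℝ, H (x, ⟨0, by norm_num⟩) = f x) ∧
      (∀ x : ℝ, H (x, ⟨1, by norm_num⟩) = g x) ∧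
      (∀ t : Set.Icc (0:ℝ) 1, (fun x => H (x, t)) ∈ ContDiffOneMinOneMax n) :=
  exists_homotopy_of_joinedIn <|
    joinedIn_contDiffOneMinOneMax (f := ⟨f, hf.1.continuous⟩) (g := ⟨g, hg.1.continuous⟩) hf hg

theorem smoothOneMinOneMax_pathConnected
    (f g : ℝ → ℝ) (hf : f ∈ SmoothOneMinOneMax) (hg : g ∈ SmoothOneMinOneMax) :
    ∃ H : ℝ × Set.Icc (0:ℝ) 1 → ℝ, Continuous H ∧
      (∀ x : ℝ, H (x, ⟨0, by norm_num⟩) = f x) ∧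
      (∀ x : ℝ, H (x, ⟨1, by norm_num⟩) = g x) ∧
      (∀ t : Set.Icc (0:ℝ) 1, (fun x => H (x, t)) ∈ SmoothOneMinOneMax) :=
  smoothOneMinOneMax_pathConnected_general f g hf hg
end
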